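/- Residue identity for homogeneous multipliers of degree −1: let v ∈ ℝ³ with |v| < 1, let i ∈ {0,1,2,3}, and let m ∈ C^∞(ℝ⁴ \ {0}) be homogeneous of degree −1, i.e. m(λz) = λ^{−1} m(z) for all λ > 0 and z ∈ ℝ⁴ \ {0}. Then ∫_{S²} ( ∂_i m − T(m α_i) )(1,ω) dσ(ω) = 0, where T = ∂_t + v·∇_x, dσ is the rotation-invariant surface measure on the unit sphere S² ⊂ ℝ³, and the integrand is evaluated at (t,x) = (1,ω). -/

import Mathlib

open MeasureTheory Real Set Filter Metric RealInnerProductSpace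
open scoped ENNReal NNReal Topology

noncomputable section

/-- Physical space `ℝ³` with its Euclidean structure. -/
abbrev E3 : Type := EuclideanSpace ℝ (Fin 3)

/-- The `i`-th standard basis vector of `ℝ³`. -/
def e3 (i : Fin 3) : E3 := EuclideanSpace.single i 1

/-- The rotation invariant surface measure on the unit sphere `S² ⊂ ℝ³`
(with total mass `4π`). -/
def sphMeasure : Measure (Metric.sphere (0 : E3) 1) := (volume : Measure E3).toSphere

/-- The forward fundamental solution `Y` of the d'Alembertian in `1+3` dimensions, as a
measure on `ℝ⁴ = ℝₜ × ℝ³ₓ`: it acts on a function `φ` by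
`⟨Y,φ⟩ = ∫₀^∞ (1/(4πt)) ∫_{|x|=t} φ(t,x) dσ_t(x) dt
       = ∫₀^∞ (t/(4π)) ∫_{S²} φ(t,tω) dσ(ω) dt`. -/
def Ymeas : Measure (ℝ × E3) :=
  Measure.map (fun q : ℝ × Metric.sphere (0 : E3) 1 => (q.1, q.1 • (q.2 : E3)))
    ((((volume : Measure ℝ).restrict (Set.Ioi 0)).withDensity
        fun t => ENNReal.ofReal (t / (4 * Real.pi))).prod sphMeasure)

/-- Time derivative `∂ₜ` of a function on `ℝ⁴ = ℝₜ × ℝ³ₓ`. -/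
def dt4 (g : ℝ × E3 → ℝ) (p : ℝ × E3) : ℝ := fderiv ℝ g p ((1 : ℝ), (0 : E3))

/-- Spatial partial derivative `∂_{x_i}` of a function on `ℝ⁴ = ℝₜ × ℝ³ₓ`. -/
def dx4 (i : Fin 3) (g : ℝ × E3 → ℝ) (p : ℝ × E3) : ℝ := fderiv ℝ g p ((0 : ℝ), e3 i)

/-- The streaming operator `T = ∂ₜ + v·∇ₓ`, i.e. the directional derivative
along `(1,v)`. -/
def Tstr (v : E3) (g : ℝ × E3 → ℝ) (p : ℝ × E3) : ℝ := fderiv ℝ g p ((1 : ℝ), v)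

/-- The four coordinate directions of `ℝ⁴ = ℝₜ × ℝ³ₓ` (with `x₀ = t`). -/
def dir4 : Fin 4 → ℝ × E3 :=
  Fin.cons ((1 : ℝ), (0 : E3)) fun j : Fin 3 => ((0 : ℝ), e3 j)

/-- The functions `α₀(t,x) = t/(t - x·v)` and `α_i(t,x) = x_i/(x·v - t)`, `i = 1,2,3`. -/
def alphaF (v : E3) : Fin 4 → ℝ × E3 → ℝ :=
  Fin.cons (fun p => p.1 / (p.1 - ⟪p.2, v⟫)) fun (j : Fin 3) p => p.2 j / (⟪p.2, v⟫ - p.1)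

/-- `Tα_i`, the streaming derivative of `α_i`. -/
def TalphaF (v : E3) (i : Fin 4) (p : ℝ × E3) : ℝ := fderiv ℝ (alphaF v i) p ((1 : ℝ), v)

/-!
A function `g` on `E \ {0}`, `dim E = n`, that is homogeneous of degree `1 - n` satisfies
`∫_S ∂_u g = 0` for each constant direction `u`: integrate `∂_u (ψ(‖x‖) g)` over `E` in polar
coordinates for a cutoff `ψ` supported in `(0, ∞)`. The term with `ψ'` has radial factor
`∫ ψ'(r) dr = 0`, while `∂_u g` comes with the factor `∫ ψ(r) / r dr`, which can be made nonzero.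

Writing `⟨·,·⟩` for the Minkowski form, `α_i` is the quotient `⟨dir4 i, q⟩ / ⟨(1, v), q⟩`, so that
`F = m` and `G = m α_i` satisfy `⟨d, q⟩ F = ⟨e, q⟩ G` with `d = dir4 i` and `e = (1, v)`.
Decomposing `d` and `e` into a vector tangent to the light cone and a multiple of `∂ₜ`, and
differentiating this relation in time, all transversal derivatives cancel in `∂_d F - ∂_e G`. What
remains at `(1, ω)` is a difference of spatial derivatives of `F(‖x‖, x) / ‖x‖` and
`G(‖x‖, x) / ‖x‖`, which are homogeneous of degree `1 - n` as soon as `F` and `G` have degree `2 - n`.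
-/

/-- Positive homogeneity of degree `k` of a function on `E \ {0}`; nothing is required of the value
at `0`. -/
def PosHomogeneous {E : Type*} [AddCommGroup E] [Module ℝ E] (k : ℤ) (f : E → ℝ) : Prop :=
  ∀ ⦃c : ℝ⦄, 0 < c → ∀ ⦃x : E⦄, x ≠ 0 → f (c • x) = c ^ k * f x

namespace PosHomogeneous

section Module

variable {E : Type*} [AddCommGroup E] [Module ℝ E] {f g : E → ℝ} {k l : ℤ}

protected lemma mul (hf : PosHomogeneous k f) (hg : PosHomogeneous l g) :
    PosHomogeneous (k + l) fun x => f x * g x := fun c hc x hx => by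
  simp only [hf hc hx, hg hc hx, zpow_add₀ hc.ne']
  ring

protected lemma inv (hf : PosHomogeneous k f) :
    PosHomogeneous (-k) fun x => (f x)⁻¹ := fun c hc x hx => by
  simp only [hf hc hx, mul_inv, zpow_neg]

protected lemma div (hf : PosHomogeneous k f) (hg : PosHomogeneous l g) :
    PosHomogeneous (k - l) fun x => f x / g x := by
  simpa only [div_eq_mul_inv, sub_eq_add_neg] using hf.mul hg.inv

end Module

protected lemma norm {E : Type*} [NormedAddCommGroup E] [NormedSpace ℝ E] :
    PosHomogeneous 1 fun x : E => ‖x‖ := fun c hc x _ => by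
  simp [norm_smul, abs_of_pos hc]

protected lemma inner {E : Type*} [NormedAddCommGroup E] [InnerProductSpace ℝ E] (u : E) :
    PosHomogeneous 1 fun x : E => ⟪x, u⟫ := fun c _ x _ => by
  simp [real_inner_smul_left]

lemma fderiv_apply {E : Type*} [NormedAddCommGroup E] [NormedSpace ℝ E] {f : E → ℝ} {k : ℤ}
    (hf : PosHomogeneous k f) (u : E) : PosHomogeneous (k - 1) fun x => fderiv ℝ f x u := by
  intro c hc x hx
  have hscale : (fun y => f (c • y)) =ᶠ[𝓝 x] c ^ k • f := by
    filter_upwards [isOpen_ne.mem_nhds hx] with y hy using hf hc hy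
  have hderiv : c • fderiv ℝ f (c • x) = c ^ k • fderiv ℝ f x := by
    rw [← fderiv_comp_smul, hscale.fderiv_eq, fderiv_const_smul_field, Pi.smul_apply]
  have happly : c * fderiv ℝ f (c • x) u = c ^ k * fderiv ℝ f x u := congr($hderiv u)
  rw [zpow_sub_one₀ hc.ne', mul_right_comm, ← happly]
  field_simp

end PosHomogeneous

section PolarCoordinates

variable {E : Type*} [NormedAddCommGroup E] [NormedSpace ℝ E] [FiniteDimensional ℝ E]
  [MeasurableSpace E] [BorelSpace E] (μ : Measure E) [μ.IsAddHaarMeasure]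
  {V : Type*} [NormedAddCommGroup V]

lemma integrable_toSphere_of_continuousAt {g : E → V} (hg : ∀ x ≠ 0, ContinuousAt g x) :
    Integrable (fun ω : sphere (0 : E) 1 => g ω) μ.toSphere := by
  have hcont : Continuous fun ω : sphere (0 : E) 1 => g ω := continuous_iff_continuousAt.2 fun ω =>
    (hg ω (ne_zero_of_mem_unit_sphere ω)).comp continuous_subtype_val.continuousAt
  exact hcont.integrable_of_hasCompactSupport (.of_compactSpace _)

variable [NormedSpace ℝ V]

lemma integral_volumeIoiPow (n : ℕ) (φ : ℝ → V) :
    ∫ r : Ioi (0 : ℝ), φ r ∂(Measure.volumeIoiPow n) = ∫ r in Ioi 0, r ^ n • φ r := by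
  simp only [Measure.volumeIoiPow, ENNReal.ofReal]
  rw [integral_withDensity_eq_integral_smul (measurable_subtype_coe.pow_const _).real_toNNReal,
    integral_subtype_comap measurableSet_Ioi fun r ↦ Real.toNNReal (r ^ n) • φ r]
  refine setIntegral_congr_fun measurableSet_Ioi fun r (hr : 0 < r) ↦ ?_
  simp only [NNReal.smul_def, Real.coe_toNNReal _ (pow_nonneg hr.le _)]

theorem integral_eq_integral_toSphere_prod [Nontrivial E] (F : E → V) :
    ∫ x, F x ∂μ = ∫ q : sphere (0 : E) 1 × Ioi (0 : ℝ), F (q.2.1 • q.1.1)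
      ∂(μ.toSphere.prod (.volumeIoiPow (Module.finrank ℝ E - 1))) :=
  calc ∫ x, F x ∂μ
      = ∫ x : ({0}ᶜ : Set E), F x ∂(μ.comap Subtype.val) := by
        rw [integral_subtype_comap (measurableSet_singleton _).compl F, restrict_compl_singleton]
    _ = _ := by
        rw [← μ.measurePreserving_homeomorphUnitSphereProd.integral_comp
          (Homeomorph.measurableEmbedding _)]
        refine integral_congr_ae (.of_forall fun x => ?_)
        have hx : ‖(x : E)‖ ≠ 0 := norm_ne_zero_iff.2 x.2
        simp [smul_smul, hx]

theorem PosHomogeneous.integral_comp_norm_mul [Nontrivial E] {G : E → ℝ} {k : ℤ}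
    (hG : PosHomogeneous k G) (φ : ℝ → ℝ) :
    ∫ x, φ ‖x‖ * G x ∂μ = (∫ ω : sphere (0 : E) 1, G ω ∂μ.toSphere) *
      ∫ r in Ioi (0 : ℝ), r ^ ((Module.finrank ℝ E : ℤ) - 1 + k) * φ r := by
  have hpolar (q : sphere (0 : E) 1 × Ioi (0 : ℝ)) :
      φ ‖q.2.1 • q.1.1‖ * G (q.2.1 • q.1.1) = G q.1 * (φ q.2 * (q.2 : ℝ) ^ k) := by
    have hr : 0 < (q.2 : ℝ) := q.2.2
    rw [hG hr (ne_zero_of_mem_unit_sphere q.1), norm_smul, Real.norm_of_nonneg hr.le,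
      norm_eq_of_mem_sphere, mul_one]
    ring
  simp only [integral_eq_integral_toSphere_prod μ, hpolar]
  rw [integral_prod_mul (fun ω : sphere (0 : E) 1 => G ω)
    (fun r : Ioi (0 : ℝ) => φ r * (r : ℝ) ^ k), integral_volumeIoiPow _ (fun r => φ r * r ^ k)]
  congr 1
  refine setIntegral_congr_fun measurableSet_Ioi fun r (hr : 0 < r) => ?_
  simp only [zpow_add₀ hr.ne', ← Nat.cast_pred (R := ℤ) (Module.finrank_pos (R := ℝ) (M := E)),
    zpow_natCast, smul_eq_mul]
  ring

end PolarCoordinates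

section IntegrationByParts

lemma integrable_mul_of_continuousAt_tsupport {X : Type*} [TopologicalSpace X] [MeasurableSpace X]
    [OpensMeasurableSpace X] {μ : Measure X} [IsFiniteMeasureOnCompacts μ] {f g : X → ℝ}
    (hf : Continuous f) (hfc : HasCompactSupport f) (hg : ∀ x ∈ tsupport f, ContinuousAt g x) :
    Integrable (fun x => f x * g x) μ :=
  Continuous.integrable_of_hasCompactSupport
    (continuous_of_tsupport fun x hx =>
      hf.continuousAt.mul (hg x (tsupport_mul_subset_left hx)))
    hfc.mul_right

lemma continuousAt_fderiv_apply_of_contDiffAt {E : Type*} [NormedAddCommGroup E] [NormedSpace ℝ E]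
    {g : E → ℝ} {x : E} (hg : ContDiffAt ℝ 1 g x) (u : E) :
    ContinuousAt (fun y => fderiv ℝ g y u) x :=
  (hg.fderiv_right (m := 0) (by simp)).continuousAt.clm_apply continuousAt_const

theorem integral_mul_fderiv_eq_neg_of_contDiffAt_tsupport {E : Type*} [NormedAddCommGroup E]
    [NormedSpace ℝ E] [FiniteDimensional ℝ E] [MeasurableSpace E] [BorelSpace E] (μ : Measure E)
    [μ.IsAddHaarMeasure] {f g : E → ℝ} (hf : ContDiff ℝ 1 f) (hfc : HasCompactSupport f)
    (hg : ∀ x ∈ tsupport f, ContDiffAt ℝ 1 g x) (u : E) :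
    ∫ x, f x * fderiv ℝ g x u ∂μ = -∫ x, fderiv ℝ f x u * g x ∂μ :=
  integral_mul_fderiv_eq_neg_fderiv_mul_of_integrable
    (integrable_mul_of_continuousAt_tsupport
      ((hf.continuous_fderiv one_ne_zero).clm_apply continuous_const) (hfc.fderiv_apply ℝ u)
      fun x hx => (hg x (tsupport_fderiv_apply_subset ℝ u hx)).continuousAt)
    (integrable_mul_of_continuousAt_tsupport hf.continuous hfc
      fun x hx => continuousAt_fderiv_apply_of_contDiffAt (hg x hx) u)
    (integrable_mul_of_continuousAt_tsupport hf.continuous hfc fun x hx => (hg x hx).continuousAt)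
    (fun x _ => hf.differentiable one_ne_zero x)
    (fun x hx => (hg x hx).differentiableAt one_ne_zero)

end IntegrationByParts

section RadialCutoff

lemma exists_cutoff_integral_inv_mul_ne_zero :
    ∃ ψ : ℝ → ℝ, ContDiff ℝ 1 ψ ∧ HasCompactSupport ψ ∧ tsupport ψ ⊆ Ioi 0 ∧
      ∫ r in Ioi (0 : ℝ), r⁻¹ * ψ r ≠ 0 := by
  let χ : ContDiffBump (2 : ℝ) := ⟨1 / 2, 1, by norm_num, by norm_num⟩
  have hpos : tsupport χ ⊆ Ioi 0 := by
    rw [χ.tsupport_eq, Real.closedBall_eq_Icc]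
    exact fun r hr => lt_of_lt_of_le (by norm_num [χ]) hr.1
  refine ⟨fun r => r * χ r, contDiff_id.mul χ.contDiff, χ.hasCompactSupport.mul_left,
    tsupport_mul_subset_right.trans hpos, ne_of_gt ?_⟩
  calc 0 < ∫ r, χ r := χ.integral_pos
    _ = ∫ r in Ioi (0 : ℝ), χ r := (setIntegral_eq_integral_of_forall_compl_eq_zero fun r hr =>
        image_eq_zero_of_notMem_tsupport fun h => hr (hpos h)).symm
    _ = ∫ r in Ioi (0 : ℝ), r⁻¹ * (r * χ r) :=
        setIntegral_congr_fun measurableSet_Ioi fun r (hr : 0 < r) =>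
          (inv_mul_cancel_left₀ hr.ne' _).symm

variable {ψ : ℝ → ℝ}

lemma eventually_comp_norm_eq_zero {E : Type*} [SeminormedAddCommGroup E]
    (hψ : 0 ∉ tsupport ψ) : (fun x : E => ψ ‖x‖) =ᶠ[𝓝 0] 0 := by
  have hnorm : Tendsto (fun x : E => ‖x‖) (𝓝 0) (𝓝 0) := tendsto_norm_zero
  exact hnorm.eventually (notMem_tsupport_iff_eventuallyEq.1 hψ)

lemma hasCompactSupport_comp_norm {E : Type*} [SeminormedAddCommGroup E] [ProperSpace E]
    (hψ : HasCompactSupport ψ) : HasCompactSupport fun x : E => ψ ‖x‖ := by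
  rw [hasCompactSupport_iff_eventuallyEq, coclosedCompact_eq_cocompact] at hψ ⊢
  exact (tendsto_norm_cocompact_atTop.mono_right atTop_le_cocompact).eventually hψ

variable {E : Type*} [NormedAddCommGroup E] [InnerProductSpace ℝ E]

lemma contDiff_comp_norm {n : WithTop ℕ∞} (hψ : ContDiff ℝ n ψ) (hψ0 : 0 ∉ tsupport ψ) :
    ContDiff ℝ n fun x : E => ψ ‖x‖ := by
  refine contDiff_iff_contDiffAt.2 fun x => ?_
  rcases eq_or_ne x 0 with rfl | hx
  · exact contDiffAt_const.congr_of_eventuallyEq (eventually_comp_norm_eq_zero hψ0)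
  · exact hψ.contDiffAt.comp x (contDiffAt_norm ℝ hx)

lemma hasFDerivAt_norm_of_ne_zero {x : E} (hx : x ≠ 0) :
    HasFDerivAt (fun y : E => ‖y‖) (‖x‖⁻¹ • innerSL ℝ x) x := by
  have hx' : ‖x‖ ≠ 0 := norm_ne_zero_iff.2 hx
  have hsqrt := (hasStrictFDerivAt_norm_sq x).hasFDerivAt.sqrt (by positivity)
  simp only [Real.sqrt_sq (norm_nonneg _)] at hsqrt
  convert hsqrt using 1
  ext y
  simp only [smul_apply, coe_innerSL_apply, smul_eq_mul, nsmul_eq_mul, Nat.cast_ofNat]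
  field_simp

lemma fderiv_comp_norm_apply {x : E} (hψ : DifferentiableAt ℝ ψ ‖x‖) (hx : x ≠ 0) (u : E) :
    fderiv ℝ (fun y : E => ψ ‖y‖) x u = deriv ψ ‖x‖ * (⟪x, u⟫ / ‖x‖) := by
  have h := hψ.hasDerivAt.comp_hasFDerivAt x (hasFDerivAt_norm_of_ne_zero hx)
  rw [show (fun y : E => ψ ‖y‖) = ψ ∘ fun y => ‖y‖ from rfl, h.fderiv]
  simp [div_eq_inv_mul]

end RadialCutoff

section SphereIntegral

variable {E : Type*} [NormedAddCommGroup E] [InnerProductSpace ℝ E]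
  [FiniteDimensional ℝ E] [MeasurableSpace E] [BorelSpace E] (μ : Measure E) [μ.IsAddHaarMeasure]
  {g : E → ℝ}

lemma integral_toSphere_fderiv_mul_integral_Ioi [Nontrivial E]
    (hg : ∀ x ≠ 0, ContDiffAt ℝ 1 g x) (hhom : PosHomogeneous (1 - (Module.finrank ℝ E : ℤ)) g)
    {ψ : ℝ → ℝ} (hψ : ContDiff ℝ 1 ψ) (hψc : HasCompactSupport ψ) (hψ0 : tsupport ψ ⊆ Ioi 0)
    (u : E) :
    (∫ ω : sphere (0 : E) 1, fderiv ℝ g ω u ∂μ.toSphere) * ∫ r in Ioi (0 : ℝ), r⁻¹ * ψ r = 0 := by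
  have h0 : 0 ∉ tsupport ψ := fun h => lt_irrefl (0 : ℝ) (hψ0 h)
  have hne (x : E) (hx : x ∈ tsupport fun y : E => ψ ‖y‖) : x ≠ 0 := by
    rintro rfl
    exact notMem_tsupport_iff_eventuallyEq.2 (eventually_comp_norm_eq_zero h0) hx
  have hflux : PosHomogeneous (1 - (Module.finrank ℝ E : ℤ)) fun x => ⟪x, u⟫ / ‖x‖ * g x := by
    simpa using ((PosHomogeneous.inner u).div .norm).mul hhom
  have hradial : ∫ x, fderiv ℝ (fun y => ψ ‖y‖) x u * g x ∂μ = 0 :=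
    calc ∫ x, fderiv ℝ (fun y => ψ ‖y‖) x u * g x ∂μ
        = ∫ x, deriv ψ ‖x‖ * (⟪x, u⟫ / ‖x‖ * g x) ∂μ := by
          refine integral_congr_ae ?_
          filter_upwards [Measure.ae_ne μ 0] with x hx
          rw [fderiv_comp_norm_apply (hψ.differentiable one_ne_zero _) hx, mul_assoc]
      _ = (∫ ω : sphere (0 : E) 1, ⟪(ω : E), u⟫ / ‖(ω : E)‖ * g ω ∂μ.toSphere) *
            ∫ r in Ioi (0 : ℝ), deriv ψ r := by
          rw [hflux.integral_comp_norm_mul μ]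
          simp
      _ = 0 := by
          rw [hψc.integral_Ioi_deriv_eq hψ, image_eq_zero_of_notMem_tsupport h0, neg_zero, mul_zero]
  have hexponent : (Module.finrank ℝ E : ℤ) - 1 + (1 - Module.finrank ℝ E - 1) = -1 := by ring
  calc (∫ ω : sphere (0 : E) 1, fderiv ℝ g ω u ∂μ.toSphere) * ∫ r in Ioi (0 : ℝ), r⁻¹ * ψ r
      = ∫ x, ψ ‖x‖ * fderiv ℝ g x u ∂μ := by
        rw [(hhom.fderiv_apply u).integral_comp_norm_mul μ, hexponent]
        simp only [zpow_neg_one]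
    _ = 0 := by
        rw [integral_mul_fderiv_eq_neg_of_contDiffAt_tsupport μ (contDiff_comp_norm hψ h0)
          (hasCompactSupport_comp_norm hψc) (fun x hx => hg x (hne x hx)), hradial, neg_zero]

theorem integral_toSphere_fderiv_eq_zero (hg : ∀ x ≠ 0, ContDiffAt ℝ 1 g x)
    (hhom : PosHomogeneous (1 - (Module.finrank ℝ E : ℤ)) g) (u : E) :
    ∫ ω : sphere (0 : E) 1, fderiv ℝ g ω u ∂μ.toSphere = 0 := by
  rcases subsingleton_or_nontrivial E with hE | hE
  · simp [μ.toSphere_eq_zero_iff.2 hE]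
  · obtain ⟨ψ, hψ, hψc, hψ0, hne⟩ := exists_cutoff_integral_inv_mul_ne_zero
    exact (mul_eq_zero.1
      (integral_toSphere_fderiv_mul_integral_Ioi μ hg hhom hψ hψc hψ0 u)).resolve_right hne

end SphereIntegral

section LightCone

variable {E : Type*} [NormedAddCommGroup E]

/-- The graph parametrization of the forward light cone `{(t, x) | t = ‖x‖}` of `ℝ × E`. -/
def lightCone (x : E) : ℝ × E := (‖x‖, x)

lemma lightCone_of_mem_sphere (ω : sphere (0 : E) 1) : lightCone (ω : E) = (1, (ω : E)) := by
  simp [lightCone]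

lemma lightCone_ne_zero {x : E} (hx : x ≠ 0) : lightCone x ≠ 0 :=
  fun h => hx congr(($h).2)

/-- The density, in the coordinate `x`, of `F` times the Lorentz invariant measure `dx / ‖x‖` on the
light cone. -/
def coneDensity (F : ℝ × E → ℝ) (x : E) : ℝ := F (lightCone x) / ‖x‖

variable [NormedSpace ℝ E]

lemma lightCone_smul {c : ℝ} (hc : 0 ≤ c) (x : E) : lightCone (c • x) = c • lightCone x := by
  simp [lightCone, norm_smul, abs_of_nonneg hc]

lemma PosHomogeneous.coneDensity {F : ℝ × E → ℝ} {k : ℤ}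
    (hF : PosHomogeneous k fun x => F (lightCone x)) :
    PosHomogeneous (k - 1) (coneDensity F) :=
  hF.div .norm

end LightCone

section Minkowski

variable {E : Type*} [NormedAddCommGroup E] [InnerProductSpace ℝ E]

/-- The Minkowski form of signature `(+, -, …, -)` on `ℝ × E`, with first argument `d`, as a
continuous linear functional of the second argument. -/
def minkowski (d : ℝ × E) : ℝ × E →L[ℝ] ℝ :=
  d.1 • ContinuousLinearMap.fst ℝ ℝ E - (innerSL ℝ d.2).comp (ContinuousLinearMap.snd ℝ ℝ E)

variable {F G : ℝ × E → ℝ} {d e : ℝ × E}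

lemma minkowski_apply (d p : ℝ × E) : minkowski d p = d.1 * p.1 - ⟪d.2, p.2⟫ := by
  simp [minkowski]

lemma minkowski_time (d : ℝ × E) : minkowski d (1, 0) = d.1 := by
  simp [minkowski]

lemma minkowski_lightCone_pos (he : ‖e.2‖ < e.1) {x : E} (hx : x ≠ 0) :
    0 < minkowski e (lightCone x) :=
  calc 0 < (e.1 - ‖e.2‖) * ‖x‖ := mul_pos (sub_pos.2 he) (norm_pos_iff.2 hx)
    _ ≤ e.1 * ‖x‖ - ⟪e.2, x⟫ := by linarith [real_inner_le_norm e.2 x]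
    _ = minkowski e (lightCone x) := (minkowski_apply e (lightCone x)).symm

lemma posHomogeneous_minkowski_lightCone (d : ℝ × E) :
    PosHomogeneous 1 fun x => minkowski d (lightCone x) := fun c hc x _ => by
  simp [lightCone_smul hc.le]

lemma contDiffAt_coneDensity {x : E} (hx : x ≠ 0) (hF : ContDiffAt ℝ 1 F (lightCone x)) :
    ContDiffAt ℝ 1 (coneDensity F) x :=
  (hF.comp x (f := lightCone) ((contDiffAt_norm ℝ hx).prodMk contDiffAt_id)).div
    (contDiffAt_norm ℝ hx) (norm_ne_zero_iff.2 hx)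

lemma norm_mul_fderiv_coneDensity {x : E} (hx : x ≠ 0) (hF : DifferentiableAt ℝ F (lightCone x))
    (u : E) :
    ‖x‖ * fderiv ℝ (coneDensity F) x u =
      fderiv ℝ F (lightCone x) (⟪x, u⟫ / ‖x‖, u) - ⟪x, u⟫ / ‖x‖ * coneDensity F x := by
  have hnorm := hasFDerivAt_norm_of_ne_zero hx
  have hcone : HasFDerivAt (F ∘ lightCone) _ x :=
    hF.hasFDerivAt.comp x (hnorm.prodMk (hasFDerivAt_id x))
  have hdensity : DifferentiableAt ℝ (coneDensity F) x :=
    hcone.differentiableAt.fun_mul (hnorm.differentiableAt.fun_inv (norm_ne_zero_iff.2 hx))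
  have heq : coneDensity F * (fun y => ‖y‖) =ᶠ[𝓝 x] F ∘ lightCone := by
    filter_upwards [isOpen_ne.mem_nhds hx] with y hy
    exact div_mul_cancel₀ _ (norm_ne_zero_iff.2 hy)
  have hprod :=
    congr($((hcone.congr_of_eventuallyEq heq).unique (hdensity.hasFDerivAt.mul hnorm)) u)
  simp only [ContinuousLinearMap.comp_apply, ContinuousLinearMap.prod_apply, smul_apply, add_apply,
    coe_innerSL_apply, ContinuousLinearMap.id_apply, smul_eq_mul, ← div_eq_inv_mul] at hprod
  linarith

lemma fderiv_eq_fderiv_coneDensity_add (ω : sphere (0 : E) 1)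
    (hF : DifferentiableAt ℝ F (1, (ω : E))) (d : ℝ × E) :
    fderiv ℝ F (1, (ω : E)) d = fderiv ℝ (coneDensity F) ω d.2 + d.1 * F (1, (ω : E)) +
      minkowski d (1, (ω : E)) * (fderiv ℝ F (1, (ω : E)) (1, 0) - F (1, (ω : E))) := by
  rw [← lightCone_of_mem_sphere] at hF
  have htangent := norm_mul_fderiv_coneDensity (ne_zero_of_mem_unit_sphere ω) hF d.2
  -- The first summand is tangent to the cone, so the restriction of `F` to the cone determines the
  -- derivative of `F` along it.
  have hsplit : d = (⟪(ω : E), d.2⟫, d.2) + minkowski d (1, (ω : E)) • ((1, 0) : ℝ × E) := by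
    ext <;> simp [minkowski_apply, real_inner_comm]
  have hlin := congrArg (fderiv ℝ F (1, (ω : E))) hsplit
  rw [map_add, map_smul, smul_eq_mul] at hlin
  simp only [coneDensity, lightCone_of_mem_sphere, norm_eq_of_mem_sphere, one_mul, div_one]
    at htangent
  rw [hlin, htangent, minkowski_apply d, real_inner_comm]
  ring

lemma minkowski_mul_fderiv_add_eq {p : ℝ × E} (hF : DifferentiableAt ℝ F p)
    (hG : DifferentiableAt ℝ G p)
    (hFG : ∀ᶠ q in 𝓝 p, minkowski d q * F q = minkowski e q * G q) (w : ℝ × E) :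
    minkowski d p * fderiv ℝ F p w + F p * minkowski d w =
      minkowski e p * fderiv ℝ G p w + G p * minkowski e w := by
  have hd := (minkowski d).hasFDerivAt.mul hF.hasFDerivAt
  have he := (minkowski e).hasFDerivAt.mul hG.hasFDerivAt
  simpa using congr($(hd.unique (he.congr_of_eventuallyEq hFG)) w)

theorem fderiv_sub_fderiv_eq_fderiv_coneDensity_sub (ω : sphere (0 : E) 1)
    (hF : DifferentiableAt ℝ F (1, (ω : E))) (hG : DifferentiableAt ℝ G (1, (ω : E)))
    (hFG : ∀ᶠ q in 𝓝 ((1, (ω : E)) : ℝ × E), minkowski d q * F q = minkowski e q * G q) :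
    fderiv ℝ F (1, (ω : E)) d - fderiv ℝ G (1, (ω : E)) e =
      fderiv ℝ (coneDensity F) ω d.2 - fderiv ℝ (coneDensity G) ω e.2 := by
  have htime := minkowski_mul_fderiv_add_eq hF hG hFG (1, 0)
  simp only [minkowski_time] at htime
  rw [fderiv_eq_fderiv_coneDensity_add ω hF d, fderiv_eq_fderiv_coneDensity_add ω hG e]
  linear_combination htime - hFG.self_of_nhds

variable [FiniteDimensional ℝ E] [MeasurableSpace E] [BorelSpace E] (μ : Measure E)
  [μ.IsAddHaarMeasure]

theorem integral_toSphere_fderiv_sub_fderiv_eq_zero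
    (hF : ∀ x ≠ 0, ContDiffAt ℝ 1 F (lightCone x))
    (hFhom : PosHomogeneous (2 - (Module.finrank ℝ E : ℤ)) fun x => F (lightCone x))
    (hG : ∀ x ≠ 0, ContDiffAt ℝ 1 G (lightCone x))
    (hGhom : PosHomogeneous (2 - (Module.finrank ℝ E : ℤ)) fun x => G (lightCone x))
    (hFG : ∀ x ≠ 0, ∀ᶠ q in 𝓝 (lightCone x), minkowski d q * F q = minkowski e q * G q) :
    ∫ ω : sphere (0 : E) 1, (fderiv ℝ F (1, (ω : E)) d - fderiv ℝ G (1, (ω : E)) e)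
      ∂μ.toSphere = 0 := by
  have hdeg : 2 - (Module.finrank ℝ E : ℤ) - 1 = 1 - (Module.finrank ℝ E : ℤ) := by ring
  have hFd (x : E) (hx : x ≠ 0) := contDiffAt_coneDensity hx (hF x hx)
  have hGd (x : E) (hx : x ≠ 0) := contDiffAt_coneDensity hx (hG x hx)
  calc ∫ ω : sphere (0 : E) 1, (fderiv ℝ F (1, (ω : E)) d - fderiv ℝ G (1, (ω : E)) e) ∂μ.toSphere
      = ∫ ω : sphere (0 : E) 1,
          (fderiv ℝ (coneDensity F) ω d.2 - fderiv ℝ (coneDensity G) ω e.2) ∂μ.toSphere := by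
        congr 1 with ω
        have hω := ne_zero_of_mem_unit_sphere ω
        apply fderiv_sub_fderiv_eq_fderiv_coneDensity_sub <;> rw [← lightCone_of_mem_sphere]
        exacts [(hF ω hω).differentiableAt one_ne_zero, (hG ω hω).differentiableAt one_ne_zero,
          hFG ω hω]
    _ = 0 := by
        rw [integral_sub
            (integrable_toSphere_of_continuousAt μ fun x hx =>
              continuousAt_fderiv_apply_of_contDiffAt (hFd x hx) d.2)
            (integrable_toSphere_of_continuousAt μ fun x hx =>
              continuousAt_fderiv_apply_of_contDiffAt (hGd x hx) e.2),
          integral_toSphere_fderiv_eq_zero μ hFd (hdeg ▸ hFhom.coneDensity),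
          integral_toSphere_fderiv_eq_zero μ hGd (hdeg ▸ hGhom.coneDensity), sub_zero]

theorem residue_identity_degree_neg_one_general (he : ‖e.2‖ < e.1) (d : ℝ × E) {m : ℝ × E → ℝ}
    (hm : ∀ x ≠ 0, ContDiffAt ℝ 1 m (lightCone x))
    (hhom : PosHomogeneous (2 - (Module.finrank ℝ E : ℤ)) fun x => m (lightCone x)) :
    ∫ ω : sphere (0 : E) 1, (fderiv ℝ m (1, (ω : E)) d -
      fderiv ℝ (fun q => m q * (minkowski d q / minkowski e q)) (1, (ω : E)) e)
      ∂μ.toSphere = 0 := by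
  have hne (x : E) (hx : x ≠ 0) : minkowski e (lightCone x) ≠ 0 :=
    (minkowski_lightCone_pos he hx).ne'
  have hαhom : PosHomogeneous 0 fun x : E =>
      minkowski d (lightCone x) / minkowski e (lightCone x) :=
    (posHomogeneous_minkowski_lightCone d).div (posHomogeneous_minkowski_lightCone e)
  refine integral_toSphere_fderiv_sub_fderiv_eq_zero μ hm hhom
    (fun x hx => (hm x hx).mul
      ((minkowski d).contDiff.contDiffAt.div (minkowski e).contDiff.contDiffAt (hne x hx)))
    (by simpa using hhom.mul hαhom) fun x hx => ?_
  filter_upwards [(minkowski e).continuous.continuousAt.eventually_ne (hne x hx)] with q hq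
  field_simp

end Minkowski

lemma alphaF_eq_minkowski_div (v : E3) (i : Fin 4) :
    alphaF v i = fun q => minkowski (dir4 i) q / minkowski ((1 : ℝ), v) q := by
  funext q
  refine Fin.cases ?_ (fun j => ?_) i
  · simp [alphaF, dir4, minkowski_apply, real_inner_comm]
  · have hcoord : ⟪e3 j, q.2⟫ = q.2 j := by simp [e3, EuclideanSpace.inner_single_left]
    simp only [alphaF, dir4, Fin.cons_succ, minkowski_apply, hcoord, real_inner_comm v, zero_mul,
      one_mul, zero_sub]
    rw [← neg_sub q.1, div_neg, neg_div]

/-- **Residue identity for homogeneous multipliers of degree `-1`**: for `|v| < 1`,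
`i ∈ {0,1,2,3}` and `m ∈ C^∞(ℝ⁴ \ {0})` homogeneous of degree `-1`, one has
`∫_{S²} (∂_i m - T(m α_i))(1,ω) dσ(ω) = 0`. -/
theorem residue_identity_degree_neg_one (v : E3) (hv : ‖v‖ < 1) (i : Fin 4)
    (m : ℝ × E3 → ℝ)
    (hm : ContDiffOn ℝ (⊤ : ℕ∞) m {p : ℝ × E3 | p ≠ 0})
    (hhom : ∀ c : ℝ, 0 < c → ∀ p : ℝ × E3, p ≠ 0 → m (c • p) = c⁻¹ * m p) :
    ∫ ω : Metric.sphere (0 : E3) 1,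
        (fderiv ℝ m ((1 : ℝ), (ω : E3)) (dir4 i)
          - fderiv ℝ (fun q => m q * alphaF v i q) ((1 : ℝ), (ω : E3)) ((1 : ℝ), v))
        ∂sphMeasure = 0 := by
  rw [alphaF_eq_minkowski_div]
  refine residue_identity_degree_neg_one_general volume (by simpa using hv) (dir4 i)
    (fun x hx => ?_) (fun c hc x hx => ?_)
  · exact (hm.contDiffAt (isOpen_ne.mem_nhds (lightCone_ne_zero hx))).of_le (mod_cast le_top)
  · simpa [lightCone_smul hc.le] using hhom c hc _ (lightCone_ne_zero hx)
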